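/- Let q > 3 be a prime such that p = 4q + 1 is also prime, and let H = {x⁴ : x ∈ (ZMod p)ˣ} be the subgroup of quartic residues of (ZMod p)ˣ. Then for every nonzero a ∈ ZMod p, the set (a·H) ∪ {0} (viewed as a subset of ZMod p) is not a difference set in the additive group ZMod p. -/

import Mathlib

/-- A subset `D` of the additive group `ZMod p` is a difference set with parameter `lam`
(a positive integer) if every nonzero `g : ZMod p` has exactly `lam` representations
`g = d₂ - d₁` with `d₁, d₂ ∈ D`. -/
def IsDiffSetZMod (p : ℕ) (D : Finset (ZMod p)) (lam : ℕ) : Prop :=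
  0 < lam ∧ ∀ g : ZMod p, g ≠ 0 →
    ((D ×ˢ D).filter (fun x => x.2 - x.1 = g)).card = lam

/-!
Counting differences gives `q + 1 = 4λ`, so the order `|D| - λ = 3λ` is divisible by `3` and every
element of `ZMod p`, zero included, has `λ` representations modulo `3`. In the group algebra over
`𝔽₃` the element `d = ∑ x ∈ D, [x]` therefore satisfies `d⁽⁻¹⁾ d = λ ∑ g, [g]`, where `d⁽⁻¹⁾` is
the sum over `-D`. When `3 ∤ q`, both `2` and `3` are nonsquares (`q` is odd), hence
`-9 = (1 + i)⁴ (3 / 2)²` with `i² = -1` is a fourth power. So `9D = -D`, and two applications of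
Frobenius give `d ^ 9 = d⁽⁻¹⁾`. Consequently `d ^ 27`, a multiple of `d ^ 9 * d`, is invariant under
translation; but it is also the indicator of `27D`, which forces `D` to be everything.
-/

open Finset
open scoped Pointwise

section DifferenceSet

variable {G : Type*} [AddGroup G] [DecidableEq G] {D : Finset G}

/-- The number of representations of `g` as a difference `d₂ - d₁` of elements of `D`, written as
in `IsDiffSetZMod`. -/
def diffCount (D : Finset G) (g : G) : ℕ :=
  #((D ×ˢ D).filter fun x => x.2 - x.1 = g)

/-- `D` is a difference set with parameter `lam` in the group `G`. The value `lam = 0` is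
allowed here, in contrast to `IsDiffSetZMod`. -/
def IsDifferenceSet (D : Finset G) (lam : ℕ) : Prop :=
  ∀ g : G, g ≠ 0 → diffCount D g = lam

theorem diffCount_zero (D : Finset G) : diffCount D 0 = #D := by
  rw [diffCount, ← diag_card D]
  congr 1
  ext ⟨x, y⟩
  simp only [mem_filter, mem_product, mem_diag, sub_eq_zero]
  grind

theorem sum_diffCount [Fintype G] (D : Finset G) : ∑ g, diffCount D g = #D * #D := by
  rw [← card_product]
  exact (card_eq_sum_card_fiberwise fun _ _ => mem_coe.mpr (mem_univ _)).symm

theorem IsDifferenceSet.card_mul_card [Fintype G] {lam : ℕ} (hD : IsDifferenceSet D lam) :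
    #D * #D = #D + (Fintype.card G - 1) * lam := by
  rw [← sum_diffCount, ← add_sum_erase _ _ (mem_univ 0), diffCount_zero,
    sum_congr rfl fun g hg => hD g (ne_of_mem_erase hg), sum_const,
    card_erase_of_mem (mem_univ _), card_univ, smul_eq_mul]

theorem image_eq_neg_of_neg_mem {f : G → G} (hf : Function.Injective f)
    (hneg : ∀ x ∈ D, -f x ∈ D) : D.image f = -D := by
  refine eq_of_subset_of_card_le (image_subset_iff.mpr fun x hx => mem_neg'.mpr (hneg x hx)) ?_
  rw [card_neg, card_image_of_injective _ hf]

end DifferenceSet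

section GroupAlgebra

variable {G : Type*} {D : Finset G}

/-- The element `∑ x ∈ D, [x]` of the group algebra `R[G]`. Its powers and products carry the
combinatorics of `D` modulo the characteristic of `R`. -/
noncomputable def indicatorSum (R : Type*) [Semiring R] (D : Finset G) : AddMonoidAlgebra R G :=
  ∑ x ∈ D, AddMonoidAlgebra.single x 1

theorem coeff_indicatorSum [DecidableEq G] (R : Type*) [Semiring R] (D : Finset G) (g : G) :
    (indicatorSum R D).coeff g = if g ∈ D then 1 else 0 := by
  simp [indicatorSum, AddMonoidAlgebra.coeff_sum, Finsupp.single_apply]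

theorem eq_univ_of_indicatorSum_coeff_const [Fintype G] {R : Type*} [Semiring R] [Nontrivial R]
    (hD : D.Nonempty) (hconst : ∀ g h, (indicatorSum R D).coeff g = (indicatorSum R D).coeff h) :
    D = univ := by
  classical
  obtain ⟨x, hx⟩ := hD
  refine eq_univ_of_forall fun y => ?_
  by_contra hy
  simpa [coeff_indicatorSum, hx, hy] using hconst x y

theorem indicatorSum_pow_prime_pow [AddCommMonoid G] [DecidableEq G] {R : Type*} [CommSemiring R]
    {ℓ : ℕ} [Fact ℓ.Prime] [CharP R ℓ] (k : ℕ)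
    (hinj : Function.Injective fun x : G => ℓ ^ k • x) :
    indicatorSum R D ^ ℓ ^ k = indicatorSum R (D.image fun x => ℓ ^ k • x) := by
  have : CharP (AddMonoidAlgebra R G) ℓ := charP_of_injective_ringHom
    (f := AddMonoidAlgebra.singleZeroRingHom) AddMonoidAlgebra.single_right_injective ℓ
  simp only [indicatorSum, sum_pow_char_pow, sum_image hinj.injOn, AddMonoidAlgebra.single_pow,
    one_pow]

theorem coeff_indicatorSum_neg_mul [AddCommGroup G] [DecidableEq G] (R : Type*) [Semiring R]
    (D : Finset G) (g : G) :
    (indicatorSum R (-D) * indicatorSum R D).coeff g = diffCount D g := by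
  simp only [indicatorSum, diffCount, sum_neg_index, sum_mul_sum, ← sum_product',
    AddMonoidAlgebra.single_mul_single, AddMonoidAlgebra.coeff_sum, Finsupp.finsetSum_apply,
    AddMonoidAlgebra.coeff_single, Finsupp.single_apply, mul_one, neg_add_eq_sub, sum_boole]

theorem coeff_mul_eq_of_coeff_const [AddGroup G] {R : Type*} [Semiring R]
    {u : AddMonoidAlgebra R G} (hu : ∀ g h, u.coeff g = u.coeff h) (v : AddMonoidAlgebra R G)
    (g h : G) : (u * v).coeff g = (u * v).coeff h := by
  induction v using AddMonoidAlgebra.induction_linear with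
  | zero => simp
  | add v w hv hw => simp [mul_add, hv, hw]
  | single x r =>
    have hcoeff (y : G) : (u * AddMonoidAlgebra.single x r).coeff y = u.coeff (y - x) * r :=
      AddMonoidAlgebra.coeff_mul_single_eq_coeff_mul _ fun _ _ => eq_sub_iff_add_eq.symm
    rw [hcoeff, hcoeff, hu]

end GroupAlgebra

theorem IsDifferenceSet.eq_univ_of_neg_prime_pow_smul_mem {G : Type*} [AddCommGroup G]
    [Fintype G] [DecidableEq G] {D : Finset G} {lam ℓ : ℕ}
    (hdiff : IsDifferenceSet D lam) (hD : D.Nonempty) (hℓ : ℓ.Prime)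
    (hcop : (Fintype.card G).Coprime ℓ) (hmod : #D ≡ lam [MOD ℓ]) (k : ℕ)
    (hneg : ∀ x ∈ D, -(ℓ ^ k • x) ∈ D) : D = univ := by
  have : Fact ℓ.Prime := ⟨hℓ⟩
  have hinj (n : ℕ) : Function.Injective fun x : G => ℓ ^ n • x :=
    (Nat.Coprime.nsmul_right_bijective
      ((Nat.card_eq_fintype_card (α := G)).symm ▸ hcop.pow_right n)).injective
  set d := indicatorSum (ZMod ℓ) D
  have hpow_neg : d ^ ℓ ^ k = indicatorSum (ZMod ℓ) (-D) := by
    rw [indicatorSum_pow_prime_pow k (hinj k), image_eq_neg_of_neg_mem (hinj k) hneg]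
  have hcoeff (g : G) : (d ^ ℓ ^ k * d).coeff g = (lam : ZMod ℓ) := by
    rw [hpow_neg, coeff_indicatorSum_neg_mul]
    rcases eq_or_ne g 0 with rfl | hg
    · rwa [diffCount_zero, ZMod.natCast_eq_natCast_iff]
    · rw [hdiff g hg]
  have hle : ℓ ^ k + 1 ≤ ℓ ^ (k + 1) := Nat.pow_lt_pow_right hℓ.one_lt k.lt_succ_self
  have hfactor : d ^ ℓ ^ (k + 1) = d ^ ℓ ^ k * d * d ^ (ℓ ^ (k + 1) - (ℓ ^ k + 1)) := by
    rw [← pow_succ, ← pow_add, Nat.add_sub_cancel' hle]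
  have himage : D.image (fun x => ℓ ^ (k + 1) • x) = univ := by
    refine eq_univ_of_indicatorSum_coeff_const (R := ZMod ℓ) (hD.image _) ?_
    rw [← indicatorSum_pow_prime_pow (k + 1) (hinj _), hfactor]
    exact coeff_mul_eq_of_coeff_const (fun g h => by rw [hcoeff, hcoeff]) _
  rw [← card_eq_iff_eq_univ, ← card_image_of_injective D (hinj (k + 1)), himage, card_univ]

section FiniteField

theorem isSquare_mul_of_not_isSquare {F : Type*} [Field F] [Finite F] {a b : F}
    (ha : ¬IsSquare a) (hb : ¬IsSquare b) : IsSquare (a * b) := by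
  classical
  have := Fintype.ofFinite F
  have hab : a * b ≠ 0 :=
    mul_ne_zero (fun h => ha (h ▸ IsSquare.zero)) (fun h => hb (h ▸ IsSquare.zero))
  rw [← quadraticChar_one_iff_isSquare hab, map_mul,
    quadraticChar_neg_one_iff_not_isSquare.mpr ha, quadraticChar_neg_one_iff_not_isSquare.mpr hb,
    neg_one_mul, neg_neg]

variable {F : Type*} [Field F] [Fintype F]

theorem three_ne_zero_of_card_mod_eight_eq_five (hF : Fintype.card F % 8 = 5) : (3 : F) ≠ 0 := by
  intro h3
  have htwo : (2 : F) = -1 := by linear_combination h3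
  have hsq : IsSquare (2 : F) := htwo ▸ FiniteField.isSquare_neg_one_iff.mpr (by omega)
  exact (FiniteField.isSquare_two_iff.mp hsq).2 hF

theorem not_isSquare_three_of_card_mod_twelve_eq_five (hF : Fintype.card F % 12 = 5) :
    ¬IsSquare (3 : F) := by
  have hchar : ringChar F ≠ 2 := fun h => by
    have := FiniteField.even_card_of_char_two h
    omega
  have hcard : (Fintype.card F : ZMod 3) = (2 : ℕ) :=
    (ZMod.natCast_eq_natCast_iff' _ 2 3).mpr (by omega)
  have hiff := FiniteField.isSquare_odd_prime_iff hchar (p := 3) (by decide)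
  rw [ZMod.χ₄_nat_one_mod_four (by omega), hcard] at hiff
  rw [← Nat.cast_three, hiff, not_not]
  decide

theorem exists_pow_four_eq_neg_nine (hF : Fintype.card F % 24 = 5) : ∃ w : F, w ^ 4 = -9 := by
  have h2 : ¬IsSquare (2 : F) := fun h => (FiniteField.isSquare_two_iff.mp h).2 (by omega)
  have h3 : ¬IsSquare (3 : F) := not_isSquare_three_of_card_mod_twelve_eq_five (by omega)
  have h2ne : (2 : F) ≠ 0 := fun h => h2 (h ▸ IsSquare.zero)
  obtain ⟨i, hi⟩ : IsSquare (-1 : F) := FiniteField.isSquare_neg_one_iff.mpr (by omega)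
  obtain ⟨s, hs⟩ : IsSquare (2 * 3 : F) := isSquare_mul_of_not_isSquare h2 h3
  have hi4 : (1 + i) ^ 4 = -4 := by grind
  have hs4 : s ^ 4 = 36 := by grind
  refine ⟨(1 + i) * s / 2, ?_⟩
  rw [div_pow, mul_pow, hi4, hs4, div_eq_iff (pow_ne_zero 4 h2ne)]
  norm_num

variable [DecidableEq F]

/-- The coset `a·H` of the group `H` of nonzero `n`-th powers of `F`, with `0` adjoined. -/
def powCosetWithZero (n : ℕ) (a : F) : Finset F :=
  insert 0 (univ.image fun u : Fˣ => a * (u : F) ^ n)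

theorem coe_powCosetWithZero (n : ℕ) (a : F) :
    (powCosetWithZero n a : Set F) = {x | ∃ u : Fˣ, x = a * (u : F) ^ n} ∪ {0} := by
  ext x
  simp [powCosetWithZero, eq_comm]

theorem zero_mem_powCosetWithZero (n : ℕ) (a : F) : 0 ∈ powCosetWithZero n a :=
  mem_insert_self _ _

theorem pow_mul_mem_powCosetWithZero {n : ℕ} {a w x : F} (hw : w ≠ 0)
    (hx : x ∈ powCosetWithZero n a) : w ^ n * x ∈ powCosetWithZero n a := by
  simp only [powCosetWithZero, mem_insert, mem_image, mem_univ, true_and] at hx ⊢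
  obtain rfl | ⟨u, rfl⟩ := hx
  · exact .inl (mul_zero _)
  · refine .inr ⟨Units.mk0 w hw * u, ?_⟩
    rw [Units.val_mul, Units.val_mk0, mul_pow, mul_left_comm]

theorem card_image_units_pow {n q : ℕ} (hF : Fintype.card F = n * q + 1) :
    #(univ.image fun u : Fˣ => u ^ n) = q := by
  have hcard : Nat.card Fˣ = n * q := by
    rw [Nat.card_eq_fintype_card, Fintype.card_units, hF, Nat.add_sub_cancel]
  have hn : 0 < n := Nat.pos_of_mul_pos_right (hcard ▸ Nat.card_pos)
  have hrange : Nat.card (powMonoidHom n : Fˣ →* Fˣ).range = q := by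
    rw [IsCyclic.card_powMonoidHom_range, hcard, Nat.gcd_eq_right (dvd_mul_right n q),
      Nat.mul_div_cancel_left q hn]
  rw [← hrange, ← Set.toFinset_range, ← Nat.card_eq_card_toFinset]
  rfl

theorem card_powCosetWithZero {n q : ℕ} (hF : Fintype.card F = n * q + 1) {a : F} (ha : a ≠ 0) :
    #(powCosetWithZero n a) = q + 1 := by
  have hinj : Function.Injective fun u : Fˣ => a * (u : F) :=
    (mul_right_injective₀ ha).comp Units.val_injective
  have himage : (univ.image fun u : Fˣ => a * (u : F) ^ n) =
      (univ.image fun u : Fˣ => u ^ n).image fun u : Fˣ => a * (u : F) := by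
    simp only [image_image, Function.comp_def, Units.val_pow_eq_pow_val]
  rw [powCosetWithZero, card_insert_of_notMem (by simp [ha]), himage,
    card_image_of_injective _ hinj, card_image_units_pow hF]

theorem IsDifferenceSet.add_one_eq_mul_of_powCosetWithZero {n q lam : ℕ}
    (hF : Fintype.card F = n * q + 1) {a : F} (ha : a ≠ 0)
    (hdiff : IsDifferenceSet (powCosetWithZero n a) lam) : q + 1 = n * lam := by
  have hq : 0 < q := by
    have := Fintype.one_lt_card (α := F)
    exact Nat.pos_of_ne_zero (by rintro rfl; omega)
  have hcount := hdiff.card_mul_card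
  rw [card_powCosetWithZero hF ha, hF, Nat.add_sub_cancel] at hcount
  exact Nat.eq_of_mul_eq_mul_left hq (by linarith)

theorem quartic_residue_coset_union_zero_not_diff_set_general {q : ℕ}
    (hF : Fintype.card F = 4 * q + 1) (hq3 : ¬3 ∣ q) {a : F} (ha : a ≠ 0) :
    ¬∃ lam : ℕ, IsDifferenceSet (powCosetWithZero 4 a) lam := by
  rintro ⟨lam, hdiff⟩
  have hlam : q + 1 = 4 * lam := hdiff.add_one_eq_mul_of_powCosetWithZero hF ha
  have h3 : (3 : F) ≠ 0 := three_ne_zero_of_card_mod_eight_eq_five (by omega)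
  have hcard3 : ¬3 ∣ Fintype.card F := fun h =>
    not_isUnit_prime_of_dvd_card h (mod_cast h3.isUnit)
  have hqmod : q % 12 = 7 := by omega
  obtain ⟨w, hw⟩ : ∃ w : F, w ^ 4 = -9 := exists_pow_four_eq_neg_nine (by omega)
  have hw0 : w ≠ 0 := by
    rintro rfl
    exact pow_ne_zero 2 h3 (by linear_combination hw)
  have huniv : powCosetWithZero 4 a = univ := by
    refine hdiff.eq_univ_of_neg_prime_pow_smul_mem ⟨0, zero_mem_powCosetWithZero 4 a⟩
      Nat.prime_three ((Nat.Prime.coprime_iff_not_dvd Nat.prime_three).mpr hcard3).symm ?_ 2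
      fun x hx => ?_
    · rw [card_powCosetWithZero hF ha, hlam, Nat.ModEq]
      omega
    · convert pow_mul_mem_powCosetWithZero hw0 hx using 1
      rw [hw, nsmul_eq_mul]
      norm_num
  have hcard := card_powCosetWithZero hF ha
  rw [huniv, card_univ, hF] at hcard
  omega

end FiniteField

/-- Let `q > 3` be a prime with `p = 4q + 1` also prime, and let `H` be the subgroup of
quartic residues of `(ZMod p)ˣ`. Then for every nonzero `a : ZMod p`, the set
`(a·H) ∪ {0}` (viewed as a subset of `ZMod p`) is not a difference set in `ZMod p`. -/
theorem quartic_residue_coset_union_zero_not_diff_set (q p : ℕ) (hq : q.Prime) (hq3 : 3 < q)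
    (hpdef : p = 4 * q + 1) (hp : p.Prime)
    (a : ZMod p) (ha : a ≠ 0) (D : Finset (ZMod p))
    (hDdef : (D : Set (ZMod p)) =
      {x : ZMod p | ∃ u : (ZMod p)ˣ, x = a * (u : ZMod p) ^ 4} ∪ {0}) :
    ¬ ∃ lam : ℕ, IsDiffSetZMod p D lam := by
  have : Fact p.Prime := ⟨hp⟩
  have hq3' : ¬3 ∣ q := fun h => hq3.ne ((Nat.prime_dvd_prime_iff_eq Nat.prime_three hq).mp h)
  obtain rfl : D = powCosetWithZero 4 a :=
    coe_injective (hDdef.trans (coe_powCosetWithZero 4 a).symm)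
  exact fun ⟨lam, hdiff⟩ => quartic_residue_coset_union_zero_not_diff_set_general
    ((ZMod.card p).trans hpdef) hq3' ha ⟨lam, hdiff.2⟩
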